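/- arXiv:2403.09335 — 2 statements merged into one kernel-verified Lean document; each statement's English description precedes it below -/
import Mathlib

section
/- Let x_0,…,x_N ∈ ℝ^d, let X : [0,N] → ℝ^d be the piecewise linear interpolation of x, and let Z denote the backward sawtooth signature coefficients of X with unit initial datum. Then for every t ∈ [0,N), every n ≥ 2 and every word (j_1,…,j_n): ⟨Z_t,(j_1,…,j_n)⟩ = ((t−⌊t⌋)^n/n! − (t−⌊t⌋)^{n−1}/(n−1)!)·∏_{s=1}^{n} Δx_{⌊t⌋}^{j_s} + Σ_{i=0}^{n−2} ((t−⌊t⌋)^i/i!)·(∏_{s=1}^{i} Δx_{⌊t⌋}^{j_s})·Σ over compositions I = (I_1,…,I_k) of n−i with I_1 ≥ 2 of (1/I! − 1/((I_1−1)!·I_2!⋯I_k!))·Σ_{0 ≤ l_1 < ⋯ < l_k < ⌊t⌋} ∏_{r=1}^{k} ∏_{p ∈ B_r} Δx_{l_r}^{j_{n+1−p}}, where B_1,…,B_k are the consecutive blocks of {1,…,n−i} determined by I (applied to the reversed suffix word (j_n, j_{n−1},…,j_{i+1})). -/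
open scoped Nat
open MeasureTheory

/-!
Read words from their last letter, so that passing from level `n + 1` to level `n + 2` integrates
the current level against the increment in a letter appended on the right. On the piece
`[k, k + 1]` the claimed value is a polynomial in `u = t - k`, and differentiating it lowers the
level by one.

The pieces fit together because of a recursion over compositions: splitting off the last block `i`
of a composition, its summation index either stays below `k` or equals `k`. The second case
produces the terms `1 / i!` multiplying the lower levels, which is what the polynomial at `u = 1`
contributes on top of its value at `u = 0`. The exceptional leading term is the case of a
composition with a single block. Here it is convenient to sum over all compositions, which is
harmless since the coefficient of a composition with first block `1` vanishes.
-/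

section IteratedSum

variable {m k : ℕ}

lemma strictMono_castSucc_comp_iff {l : Fin m → Fin k} :
    StrictMono (Fin.castSucc ∘ l) ↔ StrictMono l :=
  ⟨fun h _ _ hij => Fin.castSucc_lt_castSucc_iff.1 (h hij), Fin.strictMono_castSucc.comp⟩

lemma strictMono_snoc_last_iff {l : Fin m → Fin k} :
    StrictMono (Fin.snoc (α := fun _ => Fin (k + 1)) (Fin.castSucc ∘ l) (Fin.last k)) ↔
      StrictMono l := by
  refine ⟨fun h i j hij => ?_, fun h i j hij => ?_⟩
  · simpa using h (Fin.castSucc_lt_castSucc_iff.2 hij)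
  · induction i using Fin.lastCases with
    | last => exact absurd hij (Fin.le_last j).not_gt
    | cast i =>
      induction j using Fin.lastCases with
      | last => simp
      | cast j => simpa using h (Fin.castSucc_lt_castSucc_iff.1 hij)

section AddCommMonoid

variable {M : Type*} [AddCommMonoid M] (f : (Fin (m + 1) → Fin (k + 1)) → M)

lemma sum_strictMono_last_ne :
    ∑ l with StrictMono l ∧ l (Fin.last m) ≠ Fin.last k, f l =
      ∑ l : Fin (m + 1) → Fin k with StrictMono l, f (Fin.castSucc ∘ l) := by
  symm
  refine Finset.sum_bij (fun l _ => Fin.castSucc ∘ l) (fun l hl => ?_)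
    (fun l _ l' _ h => (Fin.castSucc_injective k).comp_left h) (fun l hl => ?_) fun _ _ => rfl
  · simpa [strictMono_castSucc_comp_iff, Fin.castSucc_ne_last] using hl
  · simp only [Finset.mem_filter_univ] at hl
    have hlt (r : Fin (m + 1)) : l r ≠ Fin.last k :=
      ((hl.1.monotone (Fin.le_last r)).trans_lt (Fin.lt_last_iff_ne_last.2 hl.2)).ne
    choose l' hl' using fun r => Fin.exists_castSucc_eq.2 (hlt r)
    obtain rfl : Fin.castSucc ∘ l' = l := funext hl'
    exact ⟨l', by simpa [strictMono_castSucc_comp_iff] using hl.1, rfl⟩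

lemma sum_strictMono_last_eq :
    ∑ l with StrictMono l ∧ l (Fin.last m) = Fin.last k, f l =
      ∑ l : Fin m → Fin k with StrictMono l,
        f (Fin.snoc (α := fun _ => Fin (k + 1)) (Fin.castSucc ∘ l) (Fin.last k)) := by
  symm
  refine Finset.sum_bij
    (fun l _ => Fin.snoc (α := fun _ => Fin (k + 1)) (Fin.castSucc ∘ l) (Fin.last k))
    (fun l hl => ?_) (fun l _ l' _ h => ?_) (fun l hl => ?_) fun _ _ => rfl
  · simpa [strictMono_snoc_last_iff] using hl
  · exact (Fin.castSucc_injective k).comp_left (Fin.snoc_injective2 h).1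
  · simp only [Finset.mem_filter_univ] at hl
    have hlt (r : Fin m) : l r.castSucc ≠ Fin.last k :=
      ((hl.1 (Fin.castSucc_lt_last r)).trans_eq hl.2).ne
    choose l' hl' using fun r => Fin.exists_castSucc_eq.2 (hlt r)
    obtain rfl :
        Fin.snoc (α := fun _ => Fin (k + 1)) (Fin.castSucc ∘ l') (Fin.last k) = l := by
      rw [← Fin.snoc_init_self l, hl.2]
      exact congrArg (Fin.snoc · _) (funext hl')
    exact ⟨l', by simpa [strictMono_snoc_last_iff] using hl.1, rfl⟩

end AddCommMonoid

variable {R : Type*} [CommSemiring R]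

/-- The sum of `g 0 (l 0) * ⋯ * g (m - 1) (l (m - 1))` over all indices
`0 ≤ l 0 < ⋯ < l (m - 1) < k`. -/
def iteratedSum (g : Fin m → ℕ → R) (k : ℕ) : R :=
  ∑ l : Fin m → Fin k with StrictMono l, ∏ r, g r (l r)

lemma iteratedSum_elim0 (g : Fin 0 → ℕ → R) (k : ℕ) : iteratedSum g k = 1 := by
  simp [iteratedSum, Subsingleton.strictMono]

lemma iteratedSum_zero (g : Fin (m + 1) → ℕ → R) : iteratedSum g 0 = 0 := by
  simp [iteratedSum]

lemma iteratedSum_comp_cast {m' : ℕ} (h : m' = m) (g : Fin m → ℕ → R) (k : ℕ) :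
    iteratedSum (g ∘ Fin.cast h) k = iteratedSum g k := by
  subst h
  rfl

lemma iteratedSum_succ (g : Fin (m + 1) → ℕ → R) (k : ℕ) :
    iteratedSum g (k + 1) =
      iteratedSum g k + iteratedSum (g ∘ Fin.castSucc) k * g (Fin.last m) k := by
  rw [iteratedSum, ← Finset.sum_filter_not_add_sum_filter _ (fun l => l (Fin.last m) = Fin.last k),
    Finset.filter_filter, Finset.filter_filter, sum_strictMono_last_ne, sum_strictMono_last_eq]
  simp [iteratedSum, Fin.prod_univ_castSucc, Finset.sum_mul]

end IteratedSum

section Composition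

lemma sum_composition_eq_sum_concat {M : Type*} [AddCommMonoid M] {n : ℕ} (hn : 0 < n)
    (f : List ℕ → M) :
    ∑ c : Composition n, f c.blocks =
      ∑ i ∈ Finset.Ico 1 (n + 1), ∑ c : Composition (n - i), f (c.blocks ++ [i]) := by
  rw [Finset.sum_sigma']
  have hmem {p : Σ i, Composition (n - i)}
      (hp : p ∈ (Finset.Ico 1 (n + 1)).sigma fun _ => Finset.univ) : 0 < p.1 ∧ p.1 ≤ n := by
    simpa [Nat.succ_le_iff, Nat.lt_succ_iff] using hp
  symm
  refine Finset.sum_bij (fun p hp => (p.2.append (Composition.single p.1 (hmem hp).1)).cast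
    (Nat.sub_add_cancel (hmem hp).2)) (fun _ _ => Finset.mem_univ _) ?_ (fun c _ => ?_)
    fun _ _ => rfl
  · rintro ⟨i, c⟩ _ ⟨j, c'⟩ _ h
    obtain ⟨hblocks, hlast⟩ := List.append_inj' (congrArg Composition.blocks h) rfl
    obtain rfl : i = j := List.singleton_injective hlast
    exact congrArg (Sigma.mk i) (Composition.ext hblocks)
  · obtain h | ⟨b, i, h⟩ := List.eq_nil_or_concat' c.blocks
    · exact absurd (c.blocks_eq_nil.1 h) hn.ne'
    · have hpos {j} (hj : j ∈ b ++ [i]) : 0 < j := c.blocks_pos (h ▸ hj)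
      have hi : 0 < i := hpos (List.mem_append_right b (List.mem_singleton_self i))
      have hsum : b.sum + i = n := by simpa [h] using c.blocks_sum
      refine ⟨⟨i, b, fun hj => hpos (List.mem_append_left _ hj), Nat.eq_sub_of_add_eq hsum⟩,
        Finset.mem_sigma.2 ⟨Finset.mem_Ico.2 ⟨hi, ?_⟩, Finset.mem_univ _⟩, Composition.ext h.symm⟩
      exact Nat.lt_succ_of_le (hsum ▸ Nat.le_add_left i b.sum)

end Composition

section BlockSum

variable {R : Type*} [CommSemiring R] (a : ℕ → ℕ → R)

/-- The iterated sum attached to a list `b` of block sizes: the `r`-th index `l` carries the product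
of `a l p` over the positions `p` in the `r`-th block of consecutive positions. Taking lists instead
of `Composition`s avoids casts when a block is appended. -/
def blockSum (b : List ℕ) : ℕ → R :=
  iteratedSum fun (r : Fin b.length) l => ∏ q ∈ Finset.range (b.get r), a l ((b.take r).sum + q)

lemma blockSum_nil (k : ℕ) : blockSum a [] k = 1 :=
  iteratedSum_elim0 _ k

lemma blockSum_zero {b : List ℕ} (hb : b ≠ []) : blockSum a b 0 = 0 := by
  obtain ⟨i, b, rfl⟩ := List.exists_cons_of_ne_nil hb
  exact iteratedSum_zero _

lemma blockSum_concat_succ (b : List ℕ) (i k : ℕ) :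
    blockSum a (b ++ [i]) (k + 1) = blockSum a (b ++ [i]) k +
      blockSum a b k * ∏ p ∈ Finset.Ico b.sum (b.sum + i), a k p := by
  have hlen : b.length + 1 = (b ++ [i]).length := by simp
  rw [blockSum, ← iteratedSum_comp_cast hlen, ← iteratedSum_comp_cast hlen, iteratedSum_succ,
    Finset.prod_Ico_eq_prod_range, Nat.add_sub_cancel_left]
  congr 2
  · refine congrArg (iteratedSum · k) (funext₂ fun r l => ?_)
    simp [List.take_append_of_le_length r.2.le]
  · simp

lemma blockSum_blocks {n : ℕ} (c : Composition n) (k : ℕ) :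
    blockSum a c.blocks k = ∑ l : Fin c.length → Fin k with StrictMono l,
      ∏ r, ∏ q : Fin (c.blocksFun r), a (l r) (c.sizeUpTo r + q) :=
  Finset.sum_congr rfl fun l _ => Finset.prod_congr rfl fun r _ =>
    Finset.prod_range fun q => a (l r) (c.sizeUpTo r + q)

end BlockSum

section Sawtooth

variable {K : Type*} [Field K]

/-- The coefficient `1 / I! - 1 / ((I₁ - 1)! I₂! ⋯ I_k!)` of a composition `I` with list of
blocks `b`. It vanishes for `I₁ = 1`, and also on `[]`, where `headI` is `0` and the subtraction is
truncated. -/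
def sawtoothCoeff (b : List ℕ) : K :=
  1 / ((b.map Nat.factorial).prod : K)
    - 1 / (((b.headI - 1)! * (b.tail.map Nat.factorial).prod : ℕ) : K)

lemma sawtoothCoeff_singleton (n : ℕ) :
    (sawtoothCoeff [n] : K) = 1 / (n ! : K) - 1 / ((n - 1)! : K) := by
  simp [sawtoothCoeff]

lemma sawtoothCoeff_concat {b : List ℕ} (hb : b ≠ []) (i : ℕ) :
    (sawtoothCoeff (b ++ [i]) : K) = sawtoothCoeff b / (i ! : K) := by
  obtain ⟨j, b, rfl⟩ := List.exists_cons_of_ne_nil hb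
  simp only [sawtoothCoeff, List.cons_append, List.map_cons, List.map_append, List.map_nil,
    List.prod_cons, List.prod_append, List.prod_nil, List.headI_cons, List.tail_cons, Nat.cast_mul,
    Nat.cast_one, one_div, mul_inv]
  ring

lemma sawtoothCoeff_eq_zero {b : List ℕ} (hb : b.headI < 2) : (sawtoothCoeff b : K) = 0 := by
  cases b with
  | nil => simp [sawtoothCoeff]
  | cons j b =>
    have hj : j < 2 := hb
    interval_cases j <;> simp [sawtoothCoeff]

variable (a : ℕ → ℕ → K)

/-- The level `n ≥ 2` signature coefficient at the node `k`, as a sum over all compositions of `n`;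
those with first block `1` contribute `0`. -/
def sawtoothSum (n k : ℕ) : K :=
  ∑ c : Composition n, sawtoothCoeff c.blocks * blockSum a c.blocks k

lemma sawtoothSum_eq_sum_filter (n k : ℕ) :
    sawtoothSum a n k = ∑ c : Composition n with 2 ≤ c.blocks.headI,
      sawtoothCoeff c.blocks * blockSum a c.blocks k :=
  (Finset.sum_filter_of_ne fun _ _ h => not_lt.1 fun hc =>
    h (by rw [sawtoothCoeff_eq_zero hc, zero_mul])).symm

lemma sawtoothSum_one (k : ℕ) : sawtoothSum a 1 k = 0 := by
  have : Subsingleton (Composition 1) :=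
    Fintype.card_le_one_iff_subsingleton.1 (composition_card 1).le
  have hblocks (c : Composition 1) : c.blocks.headI < 2 := by
    rw [Subsingleton.elim c (Composition.ones 1)]
    decide
  exact Finset.sum_eq_zero fun c _ => by rw [sawtoothCoeff_eq_zero (hblocks c), zero_mul]

lemma sawtoothSum_zero {n : ℕ} (hn : 0 < n) : sawtoothSum a n 0 = 0 :=
  Finset.sum_eq_zero fun c _ => by
    rw [blockSum_zero a (c.blocks_eq_nil.not.2 hn.ne'), mul_zero]

lemma sawtoothSum_succ_eq_add {n : ℕ} (hn : 0 < n) (k : ℕ) :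
    sawtoothSum a n (k + 1) = sawtoothSum a n k +
      ∑ i ∈ Finset.Ico 1 (n + 1), (∏ p ∈ Finset.Ico (n - i) n, a k p) *
        ∑ c : Composition (n - i), sawtoothCoeff (c.blocks ++ [i]) * blockSum a c.blocks k := by
  have hsplit (k : ℕ) := sum_composition_eq_sum_concat hn fun b => sawtoothCoeff b * blockSum a b k
  rw [sawtoothSum, sawtoothSum, hsplit, hsplit, ← Finset.sum_add_distrib]
  refine Finset.sum_congr rfl fun i hi => ?_
  rw [Finset.mul_sum, ← Finset.sum_add_distrib]
  refine Finset.sum_congr rfl fun c _ => ?_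
  rw [blockSum_concat_succ, c.blocks_sum,
    Nat.sub_add_cancel (Nat.lt_succ_iff.1 (Finset.mem_Ico.1 hi).2)]
  ring

/-- The level `n` signature coefficient at time `k + u` with `u ∈ [0, 1)`. Here `a l p` is the
increment over `[l, l + 1]` in the letter at position `p`, counted from the end of the word. -/
def sawtoothValue (n k : ℕ) (u : K) : K :=
  (u ^ n / (n ! : K) - u ^ (n - 1) / ((n - 1)! : K)) * ∏ p ∈ Finset.range n, a k p +
    ∑ i ∈ Finset.range n,
      u ^ i / (i ! : K) * (∏ p ∈ Finset.Ico (n - i) n, a k p) * sawtoothSum a (n - i) k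

lemma sawtoothValue_eq_sum_range_pred {n : ℕ} (hn : 0 < n) (k : ℕ) (u : K) :
    sawtoothValue a n k u =
      (u ^ n / (n ! : K) - u ^ (n - 1) / ((n - 1)! : K)) * ∏ p ∈ Finset.range n, a k p +
        ∑ i ∈ Finset.range (n - 1),
          u ^ i / (i ! : K) * (∏ p ∈ Finset.Ico (n - i) n, a k p) * sawtoothSum a (n - i) k := by
  obtain ⟨m, rfl⟩ := Nat.exists_eq_add_one.2 hn
  simp [sawtoothValue, Finset.sum_range_succ _ m, sawtoothSum_one]

lemma sawtoothValue_zero {n : ℕ} (hn : 2 ≤ n) (k : ℕ) :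
    sawtoothValue a n k 0 = sawtoothSum a n k := by
  rw [sawtoothValue, Finset.sum_range_eq_add_Ico _ (by omega), zero_pow (by omega),
    zero_pow (by omega), Finset.sum_eq_zero]
  · simp
  · intro i hi
    rw [zero_pow (by grind)]
    simp

lemma sawtoothValue_one {n : ℕ} (hn : 0 < n) (k : ℕ) :
    sawtoothValue a n k 1 = sawtoothSum a n (k + 1) := by
  have hlast : ∑ c : Composition (n - n), sawtoothCoeff (c.blocks ++ [n]) * blockSum a c.blocks k =
      1 / (n ! : K) - 1 / ((n - 1)! : K) := by
    have : Subsingleton (Composition 0) :=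
      Fintype.card_le_one_iff_subsingleton.1 (composition_card 0).le
    rw [Nat.sub_self, Fintype.sum_subsingleton _ (Composition.ones 0), ← sawtoothCoeff_singleton,
      (Composition.blocks_eq_nil _).2 rfl, blockSum_nil, mul_one, List.nil_append]
  have hinit : ∀ i ∈ Finset.Ico 1 n,
      ∑ c : Composition (n - i), sawtoothCoeff (c.blocks ++ [i]) * blockSum a c.blocks k =
        1 / (i ! : K) * sawtoothSum a (n - i) k := by
    intro i hi
    have hne (c : Composition (n - i)) : c.blocks ≠ [] :=
      c.blocks_eq_nil.not.2 (Nat.sub_ne_zero_of_lt (Finset.mem_Ico.1 hi).2)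
    rw [sawtoothSum, Finset.mul_sum]
    exact Finset.sum_congr rfl fun c _ => by rw [sawtoothCoeff_concat (hne c)]; ring
  rw [sawtoothSum_succ_eq_add a hn, Finset.sum_Ico_succ_top hn, hlast, sawtoothValue,
    Finset.sum_range_eq_add_Ico _ hn,
    Finset.sum_congr rfl fun i hi => congrArg (_ * ·) (hinit i hi)]
  simp only [one_pow, Nat.sub_self, Nat.sub_zero, Nat.Ico_zero_eq_range, Finset.Ico_self,
    Finset.prod_empty, Nat.factorial_zero, Nat.cast_one, div_one, one_mul, mul_left_comm, mul_assoc]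
  ring

end Sawtooth

lemma intervalIntegral_eq_sub_of_hasDerivAt_unit_intervals {E : Type*} [NormedAddCommGroup E]
    [NormedSpace ℝ E] [CompleteSpace E] {F : ℕ → ℝ → E} {f : ℝ → E} {N : ℕ}
    (hcont : ∀ k < N, ContinuousOn (F k) (Set.Icc 0 1))
    (hderiv : ∀ k < N, ∀ s ∈ Set.Ioo (0 : ℝ) 1, HasDerivAt (F k) (f (k + s)) s)
    (hint : ∀ k < N, IntervalIntegrable f volume k (k + 1))
    (hglue : ∀ k < N, F k 1 = F (k + 1) 0)
    {k : ℕ} {u : ℝ} (hu : u ∈ Set.Icc (0 : ℝ) 1) (hku : k + u ≤ N) :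
    ∫ s in 0..k + u, f s = F k u - F 0 0 := by
  have hpiece : ∀ k < N, ∀ u ∈ Set.Icc (0 : ℝ) 1, IntervalIntegrable f volume k (k + u) ∧
      ∫ s in (k : ℝ)..k + u, f s = F k u - F k 0 := by
    intro k hk u hu
    have hsub : IntervalIntegrable f volume k (k + u) :=
      (hint k hk).mono_set <| Set.uIcc_subset_uIcc_left <|
        Set.mem_uIcc_of_le (by linarith [hu.1]) (by linarith [hu.2])
    refine ⟨hsub, ?_⟩
    rw [← intervalIntegral.integral_eq_sub_of_hasDerivAt_of_le hu.1
      ((hcont k hk).mono (Set.Icc_subset_Icc_right hu.2))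
      (fun s hs => hderiv k hk s ⟨hs.1, hs.2.trans_le hu.2⟩)
      (by simpa using hsub.comp_add_left (k : ℝ)),
      intervalIntegral.integral_comp_add_left, add_zero]
  have hnode : ∀ k ≤ N, IntervalIntegrable f volume 0 k ∧
      ∫ s in (0 : ℝ)..k, f s = F k 0 - F 0 0 := by
    intro k hk
    have hint' : ∀ l < k, IntervalIntegrable f volume (l : ℝ) ((l + 1 : ℕ) : ℝ) := fun l hl => by
      simpa using hint l (hl.trans_le hk)
    refine ⟨by simpa using IntervalIntegrable.trans_iterate hint', ?_⟩
    have hsum := intervalIntegral.sum_integral_adjacent_intervals hint'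
    rw [Nat.cast_zero] at hsum
    rw [← hsum, ← Finset.sum_range_sub (fun l => F l 0)]
    refine Finset.sum_congr rfl fun l hl => ?_
    have hl' : l < N := (Finset.mem_range.1 hl).trans_le hk
    rw [Nat.cast_succ, (hpiece l hl' 1 (by simp)).2, hglue l hl']
  have hkN : k ≤ N := by exact_mod_cast (le_add_of_nonneg_right hu.1).trans hku
  obtain hk | rfl := hkN.lt_or_eq
  · rw [← intervalIntegral.integral_add_adjacent_intervals (hnode k hkN).1 (hpiece k hk u hu).1,
      (hnode k hkN).2, (hpiece k hk u hu).2, add_comm, sub_add_sub_cancel]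
  · obtain rfl : u = 0 := le_antisymm (by linarith) hu.1
    rw [add_zero, (hnode k hkN).2]

lemma hasDerivAt_pow_succ_div_factorial (n : ℕ) (u : ℝ) :
    HasDerivAt (fun u : ℝ => u ^ (n + 1) / ((n + 1)! : ℝ)) (u ^ n / (n ! : ℝ)) u := by
  refine ((hasDerivAt_pow (n + 1) u).div_const _).congr_deriv ?_
  rw [Nat.factorial_succ, Nat.cast_mul, Nat.add_sub_cancel]
  exact mul_div_mul_left _ _ (by positivity)

section SawtoothReal

variable (a : ℕ → ℕ → ℝ)

lemma hasDerivAt_sawtoothValue (n k : ℕ) (u : ℝ) :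
    HasDerivAt (sawtoothValue a (n + 2) k) (sawtoothValue a (n + 1) k u * a k (n + 1)) u := by
  have hlead : HasDerivAt
      (fun u => (u ^ (n + 2) / ((n + 2)! : ℝ) - u ^ (n + 1) / ((n + 1)! : ℝ)) *
        ∏ p ∈ Finset.range (n + 2), a k p) _ u :=
    ((hasDerivAt_pow_succ_div_factorial (n + 1) u).sub
      (hasDerivAt_pow_succ_div_factorial n u)).mul_const _
  have hterm (i : ℕ) := ((hasDerivAt_pow_succ_div_factorial i u).mul_const
      (∏ p ∈ Finset.Ico (n + 1 - i) (n + 2), a k p)).mul_const (sawtoothSum a (n + 1 - i) k)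
  have hfun : sawtoothValue a (n + 2) k = fun u =>
      (u ^ (n + 2) / ((n + 2)! : ℝ) - u ^ (n + 1) / ((n + 1)! : ℝ)) *
        ∏ p ∈ Finset.range (n + 2), a k p +
      (∑ i ∈ Finset.range (n + 1), u ^ (i + 1) / ((i + 1)! : ℝ) *
          (∏ p ∈ Finset.Ico (n + 1 - i) (n + 2), a k p) * sawtoothSum a (n + 1 - i) k +
        sawtoothSum a (n + 2) k) := by
    funext u
    simp [sawtoothValue, Finset.sum_range_succ' _ (n + 1)]
  rw [hfun]
  refine (hlead.add ((HasDerivAt.fun_sum fun i _ => hterm i).add_const _)).congr_deriv ?_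
  rw [sawtoothValue, Finset.prod_range_succ _ (n + 1), add_mul, Finset.sum_mul, mul_assoc,
    Nat.add_sub_cancel]
  refine congrArg _ (Finset.sum_congr rfl fun i _ => ?_)
  rw [Finset.prod_Ico_succ_top (Nat.sub_le _ _)]
  ring

lemma continuous_sawtoothValue (n k : ℕ) : Continuous (sawtoothValue a n k) := by
  unfold sawtoothValue
  fun_prop

lemma intervalIntegral_eq_sawtoothValue {n N : ℕ} {f : ℝ → ℝ}
    (hf : ∀ k < N, ∀ s ∈ Set.Ioo (0 : ℝ) 1, f (k + s) = sawtoothValue a (n + 1) k s * a k (n + 1))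
    {k : ℕ} {u : ℝ} (hu : u ∈ Set.Icc (0 : ℝ) 1) (hku : k + u ≤ N) :
    ∫ s in 0..k + u, f s = sawtoothValue a (n + 2) k u := by
  have hint : ∀ k < N, IntervalIntegrable f volume k (k + 1) := by
    intro k hk
    have hcont : Continuous fun s : ℝ => sawtoothValue a (n + 1) k (s - k) * a k (n + 1) :=
      ((continuous_sawtoothValue a (n + 1) k).comp (continuous_sub_right _)).mul_const _
    refine (hcont.intervalIntegrable _ _).congr_uIoo fun s hs => ?_
    rw [Set.uIoo_of_le (by linarith)] at hs
    simpa using (hf k hk (s - k) ⟨by linarith [hs.1], by linarith [hs.2]⟩).symm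
  rw [intervalIntegral_eq_sub_of_hasDerivAt_unit_intervals (F := sawtoothValue a (n + 2))
    (fun k _ => (continuous_sawtoothValue a _ k).continuousOn)
    (fun k hk s hs => (hf k hk s hs).symm ▸ hasDerivAt_sawtoothValue a n k s) hint
    (fun k _ => ?_) hu hku, sawtoothValue_zero a (by omega), sawtoothSum_zero a (by omega),
    sub_zero]
  rw [sawtoothValue_one a (by omega), sawtoothValue_zero a (by omega)]

end SawtoothReal

section Signature

variable {α : Type*} {N : ℕ} {x : ℕ → α → ℝ} {X : ℝ → α → ℝ} {Z : ℕ → (ℕ → α) → ℝ → ℝ}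

/-- `X` is the piecewise linear interpolation of `x 0, …, x N` on `[0, N]`. -/
def IsLinearInterpolation (N : ℕ) (x : ℕ → α → ℝ) (X : ℝ → α → ℝ) : Prop :=
  ∀ t ∈ Set.Icc (0 : ℝ) N, ∀ j,
    X t j = x ⌊t⌋.toNat j + (t - ⌊t⌋) * (x (⌊t⌋.toNat + 1) j - x ⌊t⌋.toNat j)

/-- `Z n w t` is the backward sawtooth signature coefficient, with unit initial datum, of the path
`X` at time `t ∈ [0, N]` for the word `w 0, …, w (n - 1)`. Words are prefixes of infinite sequences,
so that removing the first letter is a shift. -/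
structure IsBackwardSawtoothSignature (N : ℕ) (X : ℝ → α → ℝ) (Z : ℕ → (ℕ → α) → ℝ → ℝ) :
    Prop where
  one : ∀ w, ∀ t ∈ Set.Icc (0 : ℝ) N, Z 1 w t = X t (w 0) - X ((⌊t⌋ : ℝ) + 1) (w 0)
  eq_integral : ∀ n, 2 ≤ n → ∀ w, ∀ t ∈ Set.Icc (0 : ℝ) N,
    Z n w t = ∫ s in (0 : ℝ)..t, deriv (fun r => X r (w 0)) s * Z (n - 1) (fun i => w (i + 1)) s

lemma natCast_add_mem_Icc {k : ℕ} (hk : k < N) {u : ℝ} (hu : u ∈ Set.Icc (0 : ℝ) 1) :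
    (k : ℝ) + u ∈ Set.Icc (0 : ℝ) N := by
  have h : (k : ℝ) + 1 ≤ N := by exact_mod_cast hk
  exact ⟨add_nonneg k.cast_nonneg hu.1, by linarith [hu.2]⟩

lemma floor_natCast_add_eq {k : ℕ} {u : ℝ} (hu : u ∈ Set.Ico (0 : ℝ) 1) : ⌊(k : ℝ) + u⌋ = k := by
  rw [Int.floor_natCast_add, Int.floor_eq_zero_iff.2 hu, add_zero]

lemma IsLinearInterpolation.apply_natCast_add (hX : IsLinearInterpolation N x X) {k : ℕ}
    (hk : k < N) {u : ℝ} (hu : u ∈ Set.Icc (0 : ℝ) 1) (j : α) :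
    X (k + u) j = x k j + u * (x (k + 1) j - x k j) := by
  rw [hX _ (natCast_add_mem_Icc hk hu)]
  obtain hu' | rfl := hu.2.lt_or_eq
  · simp [floor_natCast_add_eq ⟨hu.1, hu'⟩]
  · simp

lemma IsLinearInterpolation.deriv_natCast_add (hX : IsLinearInterpolation N x X) {k : ℕ}
    (hk : k < N) {s : ℝ} (hs : s ∈ Set.Ioo (0 : ℝ) 1) (j : α) :
    deriv (fun r => X r j) (k + s) = x (k + 1) j - x k j := by
  rw [← deriv_comp_const_add]
  have hlin : (fun u => X (k + u) j) =ᶠ[nhds s] fun u => x k j + u * (x (k + 1) j - x k j) := by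
    filter_upwards [Icc_mem_nhds hs.1 hs.2] with u hu using hX.apply_natCast_add hk hu j
  rw [hlin.deriv_eq]
  simp

/-- The increment of `x` over `[l, l + 1]` in the letter `v p`; in use, `v` is the word read from
its last letter. -/
def increment (x : ℕ → α → ℝ) (v : ℕ → α) (l p : ℕ) : ℝ :=
  x (l + 1) (v p) - x l (v p)

namespace IsBackwardSawtoothSignature

lemma one_eq_sawtoothValue (hZ : IsBackwardSawtoothSignature N X Z)
    (hX : IsLinearInterpolation N x X) {v w : ℕ → α} (hw : w 0 = v 0) {k : ℕ} (hk : k < N) {u : ℝ}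
    (hu : u ∈ Set.Ico (0 : ℝ) 1) :
    Z 1 w (k + u) = sawtoothValue (increment x v) 1 k u := by
  rw [hZ.one w _ (natCast_add_mem_Icc hk ⟨hu.1, hu.2.le⟩), floor_natCast_add_eq hu, hw,
    hX.apply_natCast_add hk ⟨hu.1, hu.2.le⟩, Int.cast_natCast, hX.apply_natCast_add hk (by simp)]
  simp only [sawtoothValue, sawtoothSum_one, increment, Finset.prod_range_one, Finset.sum_range_one,
    Nat.sub_zero, Nat.sub_self, Nat.factorial_one, Nat.factorial_zero, Nat.cast_one, pow_one,
    pow_zero, mul_zero]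
  ring

lemma succ_eq_sawtoothValue (hZ : IsBackwardSawtoothSignature N X Z)
    (hX : IsLinearInterpolation N x X) {n : ℕ} {v w : ℕ → α} (hw : w 0 = v (n + 1))
    (hprev : ∀ k < N, ∀ s ∈ Set.Ioo (0 : ℝ) 1,
      Z (n + 1) (fun i => w (i + 1)) (k + s) = sawtoothValue (increment x v) (n + 1) k s)
    {k : ℕ} {u : ℝ} (hu : u ∈ Set.Icc (0 : ℝ) 1) (hku : k + u ≤ N) :
    Z (n + 2) w (k + u) = sawtoothValue (increment x v) (n + 2) k u := by
  rw [hZ.eq_integral (n + 2) (by omega) w _ ⟨add_nonneg k.cast_nonneg hu.1, hku⟩]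
  refine intervalIntegral_eq_sawtoothValue _ (fun k hk s hs => ?_) hu hku
  rw [hX.deriv_natCast_add hk hs, Nat.add_succ_sub_one, hprev k hk s hs, hw, mul_comm]
  rfl

lemma eq_sawtoothValue (hZ : IsBackwardSawtoothSignature N X Z)
    (hX : IsLinearInterpolation N x X) {n : ℕ} (hn : 2 ≤ n) {v w : ℕ → α}
    (hw : ∀ s p, s + p + 1 = n → w s = v p) {k : ℕ} {u : ℝ} (hu : u ∈ Set.Icc (0 : ℝ) 1)
    (hku : k + u ≤ N) :
    Z n w (k + u) = sawtoothValue (increment x v) n k u := by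
  induction n, hn using Nat.le_induction generalizing w k u with
  | base =>
    exact hZ.succ_eq_sawtoothValue hX (hw 0 1 rfl)
      (fun k hk s hs => hZ.one_eq_sawtoothValue hX (hw 1 0 rfl) hk ⟨hs.1.le, hs.2⟩) hu hku
  | succ n hn ih =>
    obtain ⟨n, rfl⟩ := Nat.exists_eq_add_of_le' hn
    refine hZ.succ_eq_sawtoothValue hX (hw 0 (n + 2) (by omega)) (fun k hk s hs => ?_) hu hku
    have hs' := Set.Ioo_subset_Icc_self hs
    exact ih (fun s p hsp => hw (s + 1) p (by omega)) hs' (natCast_add_mem_Icc hk hs').2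

end IsBackwardSawtoothSignature

lemma prod_increment_reverse (x : ℕ → α → ℝ) (w : ℕ → α) (k : ℕ) {i n : ℕ} (hi : i ≤ n) :
    ∏ p ∈ Finset.Ico (n - i) n, increment x (fun p => w (n - 1 - p)) k p =
      ∏ s ∈ Finset.range i, (x (k + 1) (w s) - x k (w s)) := by
  obtain rfl | hn := n.eq_zero_or_pos
  · simp [Nat.le_zero.1 hi]
  · simp only [increment]
    rw [Finset.prod_Ico_reflect (fun s => x (k + 1) (w s) - x k (w s)) _ (by omega),
      Nat.sub_add_cancel hn, Nat.sub_self, Nat.sub_sub_self hi, Nat.Ico_zero_eq_range]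

end Signature

theorem sawtooth_signature_explicit_general {α : Type*} {N : ℕ} {x : ℕ → α → ℝ} {X : ℝ → α → ℝ}
    (hX : IsLinearInterpolation N x X) {Z : ℕ → (ℕ → α) → ℝ → ℝ}
    (hZ : IsBackwardSawtoothSignature N X Z) {t : ℝ} (ht : t ∈ Set.Icc (0 : ℝ) N) {n : ℕ}
    (hn : 2 ≤ n) (w : ℕ → α) :
    Z n w t =
      ((t - ⌊t⌋) ^ n / (n ! : ℝ) - (t - ⌊t⌋) ^ (n - 1) / ((n - 1)! : ℝ)) *
        (∏ s ∈ Finset.range n, (x (⌊t⌋.toNat + 1) (w s) - x ⌊t⌋.toNat (w s)))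
      + ∑ i ∈ Finset.range (n - 1),
          ((t - ⌊t⌋) ^ i / (i ! : ℝ)) *
            (∏ s ∈ Finset.range i, (x (⌊t⌋.toNat + 1) (w s) - x ⌊t⌋.toNat (w s))) *
            ∑ c ∈ Finset.univ.filter (fun c : Composition (n - i) => 2 ≤ c.blocks.headI),
              (1 / ((c.blocks.map Nat.factorial).prod : ℝ)
                - 1 / ((((c.blocks.headI - 1)! *
                    (c.blocks.tail.map Nat.factorial).prod : ℕ)) : ℝ)) *
                ∑ l ∈ Finset.univ.filter
                    (fun l : Fin c.length → Fin ⌊t⌋.toNat => StrictMono l),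
                  ∏ r : Fin c.length, ∏ q : Fin (c.blocksFun r),
                    (x ((l r : ℕ) + 1) (w (n - 1 - (c.sizeUpTo r + q))) -
                      x (l r : ℕ) (w (n - 1 - (c.sizeUpTo r + q)))) := by
  have hfloor : (⌊t⌋.toNat : ℝ) = ⌊t⌋ := natCast_floor_eq_intCast_floor ht.1
  have hdecomp : ⌊t⌋.toNat + (t - ⌊t⌋) = t := by rw [hfloor, add_sub_cancel]
  have hvalue := hZ.eq_sawtoothValue hX hn (v := fun p => w (n - 1 - p)) (w := w)
    (k := ⌊t⌋.toNat) (u := t - ⌊t⌋) (fun s p hsp => congrArg w (by omega))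
    ⟨Int.fract_nonneg t, (Int.fract_lt_one t).le⟩ (hdecomp.trans_le ht.2)
  have hlead := prod_increment_reverse x w ⌊t⌋.toNat le_rfl (n := n)
  rw [Nat.sub_self, Nat.Ico_zero_eq_range] at hlead
  rw [hdecomp] at hvalue
  rw [hvalue, sawtoothValue_eq_sum_range_pred _ (by omega), hlead]
  refine congrArg _ (Finset.sum_congr rfl fun i hi => ?_)
  rw [prod_increment_reverse x w _ (by grind), sawtoothSum_eq_sum_filter]
  simp only [blockSum_blocks]
  rfl

/-- Explicit formula for the backward sawtooth signature coefficients (unit initial datum)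
of the piecewise linear interpolation of a time series `x`, at an arbitrary time
`t ∈ [0,N)`, in terms of the fractional part of `t` and composition sums applied to the
reversed suffix words. -/
theorem sawtooth_signature_explicit {d : ℕ} (N : ℕ) (hN : 1 ≤ N)
    (x : ℕ → Fin d → ℝ) (X : ℝ → Fin d → ℝ)
    (hX : ∀ t ∈ Set.Icc (0:ℝ) (N:ℝ), ∀ j : Fin d,
      X t j = x ⌊t⌋.toNat j + (t - ⌊t⌋) * (x (⌊t⌋.toNat + 1) j - x ⌊t⌋.toNat j))
    (Z : ℕ → (ℕ → Fin d) → ℝ → ℝ)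
    (hZ1 : ∀ (w : ℕ → Fin d), ∀ t ∈ Set.Icc (0:ℝ) (N:ℝ),
      Z 1 w t = X t (w 0) - X ((⌊t⌋ : ℝ) + 1) (w 0))
    (hZrec : ∀ n, 2 ≤ n → ∀ (w : ℕ → Fin d), ∀ t ∈ Set.Icc (0:ℝ) (N:ℝ),
      Z n w t = ∫ s in (0:ℝ)..t,
        deriv (fun r => X r (w 0)) s * Z (n - 1) (fun i => w (i + 1)) s)
    (t : ℝ) (ht : t ∈ Set.Ico (0:ℝ) (N:ℝ)) (n : ℕ) (hn : 2 ≤ n) (w : ℕ → Fin d) :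
    Z n w t =
      ((t - ⌊t⌋) ^ n / (n ! : ℝ) - (t - ⌊t⌋) ^ (n - 1) / ((n - 1)! : ℝ)) *
        (∏ s ∈ Finset.range n, (x (⌊t⌋.toNat + 1) (w s) - x ⌊t⌋.toNat (w s)))
      + ∑ i ∈ Finset.range (n - 1),
          ((t - ⌊t⌋) ^ i / (i ! : ℝ)) *
            (∏ s ∈ Finset.range i, (x (⌊t⌋.toNat + 1) (w s) - x ⌊t⌋.toNat (w s))) *
            ∑ c ∈ Finset.univ.filter (fun c : Composition (n - i) => 2 ≤ c.blocks.headI),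
              (1 / ((c.blocks.map Nat.factorial).prod : ℝ)
                - 1 / ((((c.blocks.headI - 1)! *
                    (c.blocks.tail.map Nat.factorial).prod : ℕ)) : ℝ)) *
                ∑ l ∈ Finset.univ.filter
                    (fun l : Fin c.length → Fin ⌊t⌋.toNat => StrictMono l),
                  ∏ r : Fin c.length, ∏ q : Fin (c.blocksFun r),
                    (x ((l r : ℕ) + 1) (w (n - 1 - (c.sizeUpTo r + q))) -
                      x (l r : ℕ) (w (n - 1 - (c.sizeUpTo r + q)))) :=
  sawtooth_signature_explicit_general hX ⟨hZ1, hZrec⟩ (Set.Ico_subset_Icc_self ht) hn w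
end

section
/- For every integer l ≥ 1 and every real t ≥ 0: Σ_{j=0}^{l} (t^{l−j}/(l−j)!)·(bernoulli j)/j! − Σ_{k=0}^{⌊t⌋−1} (t−k−1)^{l−1}/(l−1)! = P_l(t − ⌊t⌋)/l!. (This says the forward optimal sawtooth signature of the path X_t = t, with initial constants b_j = (bernoulli j)/j!, equals the periodized Bernoulli polynomial divided by l!.) -/
open scoped Nat

/-- The `l`-th Bernoulli polynomial `P_l(x) = ∑_{j=0}^l C(l,j) · B_j · x^{l-j}`,
with `bernoulli 1 = -1/2`. -/
noncomputable def bernoulliPoly (l : ℕ) (x : ℝ) : ℝ :=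
  ∑ j ∈ Finset.range (l + 1), (l.choose j : ℝ) * ((bernoulli j : ℚ) : ℝ) * x ^ (l - j)

/-! The Bernoulli polynomials satisfy `P_l(1 + x) - P_l(x) = l x^{l-1}`. Lowering the argument from
`t` to `t - n` in unit steps therefore subtracts `l (t - k - 1)^{l-1}` for each `k < n`, and
dividing by `l!` turns these into the sawtooth terms. -/

section Algebra

variable {A : Type*} [CommRing A] [Algebra ℚ A]

lemma aeval_one_add_bernoulli (l : ℕ) (x : A) :
    Polynomial.aeval (1 + x) (Polynomial.bernoulli l) =
      Polynomial.aeval x (Polynomial.bernoulli l) + l * x ^ (l - 1) := by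
  simpa [Polynomial.aeval_comp] using
    congrArg (Polynomial.aeval x) (Polynomial.bernoulli_comp_one_add_X l)

lemma aeval_sub_natCast_bernoulli (l : ℕ) (t : A) (n : ℕ) :
    Polynomial.aeval (t - n) (Polynomial.bernoulli l) =
      Polynomial.aeval t (Polynomial.bernoulli l) -
        l * ∑ k ∈ Finset.range n, (t - k - 1) ^ (l - 1) := by
  have hstep (k : ℕ) : l * (t - k - 1) ^ (l - 1) =
      Polynomial.aeval (t - k) (Polynomial.bernoulli l) -
        Polynomial.aeval (t - (k + 1 : ℕ)) (Polynomial.bernoulli l) := by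
    rw [Nat.cast_succ, ← sub_sub, eq_sub_iff_add_eq', ← aeval_one_add_bernoulli, add_sub_cancel]
  simp only [Finset.mul_sum, hstep, Finset.sum_range_sub', Nat.cast_zero, sub_zero,
    sub_sub_cancel]

end Algebra

section Field

variable {K : Type*} [Field K] [CharZero K]

lemma aeval_bernoulli_eq_sum (l : ℕ) (x : K) :
    Polynomial.aeval x (Polynomial.bernoulli l) =
      ∑ j ∈ Finset.range (l + 1), (l.choose j : K) * (bernoulli j : ℚ) * x ^ (l - j) := by
  simp only [Polynomial.bernoulli, map_sum, Polynomial.aeval_monomial, eq_ratCast, Rat.cast_mul,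
    Rat.cast_natCast, mul_comm (bernoulli _ : K)]

lemma aeval_bernoulli_div_factorial (l : ℕ) (x : K) :
    Polynomial.aeval x (Polynomial.bernoulli l) / (l ! : K) =
      ∑ j ∈ Finset.range (l + 1),
        (x ^ (l - j) / ((l - j)! : K)) * ((bernoulli j : ℚ) / (j ! : K)) := by
  rw [aeval_bernoulli_eq_sum, Finset.sum_div]
  refine Finset.sum_congr rfl fun j hj => ?_
  rw [Nat.cast_choose K (Finset.mem_range_succ_iff.mp hj)]
  have hfactorial : (l ! : K) ≠ 0 := Nat.cast_ne_zero.mpr l.factorial_ne_zero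
  field_simp

theorem forward_optimal_sawtooth_eq_bernoulliPoly_general (l : ℕ) (hl : 1 ≤ l) (t : K) (n : ℕ) :
    (∑ j ∈ Finset.range (l + 1),
        (t ^ (l - j) / ((l - j)! : K)) * ((bernoulli j : ℚ) / (j ! : K)))
      - (∑ k ∈ Finset.range n, (t - k - 1) ^ (l - 1) / ((l - 1)! : K))
      = Polynomial.aeval (t - n) (Polynomial.bernoulli l) / (l ! : K) := by
  have hl₀ : l ≠ 0 := Nat.one_le_iff_ne_zero.mp hl
  have hfactorial : (l ! : K) = l * (l - 1)! := mod_cast (Nat.mul_factorial_pred hl₀).symm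
  rw [aeval_sub_natCast_bernoulli, sub_div, aeval_bernoulli_div_factorial, hfactorial,
    mul_div_mul_left _ _ (Nat.cast_ne_zero.mpr hl₀), Finset.sum_div]

end Field

/-- The forward optimal sawtooth signature of `X_t = t`, with constants
`b_j = bernoulli j / j!`, equals the periodized Bernoulli polynomial over `l!`. -/
theorem forward_optimal_sawtooth_eq_bernoulliPoly (l : ℕ) (hl : 1 ≤ l)
    (t : ℝ) (ht : 0 ≤ t) :
    (∑ j ∈ Finset.range (l + 1),
        (t ^ (l - j) / ((l - j)! : ℝ)) * (((bernoulli j : ℚ) : ℝ) / (j ! : ℝ)))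
      - (∑ k ∈ Finset.range ⌊t⌋.toNat, (t - (k : ℝ) - 1) ^ (l - 1) / ((l - 1)! : ℝ))
      = bernoulliPoly l (t - ⌊t⌋) / (l ! : ℝ) := by
  rw [bernoulliPoly, ← aeval_bernoulli_eq_sum, ← natCast_floor_eq_intCast_floor ht, Int.floor_toNat]
  exact forward_optimal_sawtooth_eq_bernoulliPoly_general l hl t ⌊t⌋₊
end
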